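/- In ℝ⁵ with the standard Euclidean inner product, let S be the set of four vectors (1/3,-2/3,1/3,1/2,-1/2), (-2/3,1/3,1/3,1/2,-1/2), (1/3,-2/3,1/3,-1/2,1/2), (-2/3,1/3,1/3,-1/2,1/2). Then the minimum of ‖x‖² over x in the convex hull of S equals 1/6, and it is attained at the point β₄ = (-1/6,-1/6,1/3,0,0). -/

import Mathlib

/-- A vector in `ℝ⁵` with the standard Euclidean inner product. -/
noncomputable def vec5 (a b c d e : ℝ) : EuclideanSpace ℝ (Fin 5) :=
  (WithLp.equiv 2 (Fin 5 → ℝ)).symm ![a, b, c, d, e]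

/-- Table (2.3) for `(GL(3)×GL(2), Sym²k³⊗k²)`: the minimum of `‖x‖²` over the
convex hull of the listed weight vectors equals `1/6`, attained at
`β₄ = ((-1/6) (-1/6) (1/3) 0 0)`. -/
theorem minsq_of_convexHull_weights :
    let S : Set (EuclideanSpace ℝ (Fin 5)) :=
      {vec5 (1/3) (-2/3) (1/3) (1/2) (-1/2),
       vec5 (-2/3) (1/3) (1/3) (1/2) (-1/2),
       vec5 (1/3) (-2/3) (1/3) (-1/2) (1/2),
       vec5 (-2/3) (1/3) (1/3) (-1/2) (1/2)}
    let β : EuclideanSpace ℝ (Fin 5) := vec5 (-1/6) (-1/6) (1/3) 0 0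
    β ∈ convexHull ℝ S ∧ ‖β‖ ^ 2 = 1/6 ∧
      ∀ x ∈ convexHull ℝ S, (1/6 : ℝ) ≤ ‖x‖ ^ 2 := by
  intro S β
  refine ⟨?_, ?_, ?_⟩
  · have h1 : vec5 (1/3) (-2/3) (1/3) (1/2) (-1/2) ∈ convexHull ℝ S :=
      subset_convexHull ℝ S (by simp [S])
    have h4 : vec5 (-2/3) (1/3) (1/3) (-1/2) (1/2) ∈ convexHull ℝ S :=
      subset_convexHull ℝ S (by simp [S])
    have h := (convex_convexHull ℝ S) h1 h4 (a := 1/2) (b := 1/2)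
      (by norm_num) (by norm_num) (by norm_num)
    convert h using 1
    ext i
    fin_cases i <;> simp [β, vec5] <;> norm_num
  · rw [EuclideanSpace.norm_sq_eq]
    simp [β, vec5, Fin.sum_univ_five]
    norm_num
  · have hc : Convex ℝ {x : EuclideanSpace ℝ (Fin 5) | x 0 + x 1 = -1/3 ∧ x 2 = 1/3} := by
      rintro x ⟨hx, hx'⟩ y ⟨hy, hy'⟩ a b _ _ hab
      simp only [Set.mem_setOf_eq, PiLp.add_apply, PiLp.smul_apply, smul_eq_mul]
      constructor
      · linear_combination a * hx + b * hy - 1/3 * hab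
      · linear_combination a * hx' + b * hy' + 1/3 * hab
    have hS : S ⊆ {x : EuclideanSpace ℝ (Fin 5) | x 0 + x 1 = -1/3 ∧ x 2 = 1/3} := by
      rintro x (rfl | rfl | rfl | rfl) <;> simp [vec5] <;> norm_num
    intro x hx
    obtain ⟨h01, h2⟩ := convexHull_min hS hc hx
    rw [EuclideanSpace.norm_sq_eq]
    simp only [Fin.sum_univ_five, Real.norm_eq_abs, sq_abs]
    rw [h2]
    nlinarith [sq_nonneg (x 0 - x 1), sq_nonneg (x 3), sq_nonneg (x 4),
      congrArg (fun t => t ^ 2) h01]
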